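/- Let R_l > 0 and L_l > 0 be real numbers. For real parameters P̄, ν̄, ρ̄, define the symmetric 2×2 matrix M(P̄, ν̄, ρ̄) = [[2P̄R_l/L_l − ρ̄, −P̄/L_l + 1/2], [−P̄/L_l + 1/2, −ν̄]]. Then: (i) with P̄ = L_l/2 > 0, ν̄ = 0, and ρ̄ = R_l, the matrix M(L_l/2, 0, R_l) is positive semidefinite; (ii) every triple (P̄, ν̄, ρ̄) with P̄ > 0 and M(P̄, ν̄, ρ̄) positive semidefinite satisfies ν̄ ≤ 0; (iii) if in addition ν̄ = 0, then necessarily P̄ = L_l/2 and ρ̄ ≤ R_l. Hence the maximal feasible passivity indices are ν̄ = 0 and ρ̄ = R_l, attained at P̄ = L_l/2. -/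

import Mathlib

open Matrix

/-!
A symmetric `2 × 2` matrix is positive semidefinite iff its diagonal and its determinant are
nonnegative. The lower diagonal entry `-ν` gives `ν ≤ 0`. At `ν = 0` the determinant is minus the
square of the off-diagonal entry, so that entry vanishes; this pins `P = L / 2`, and the upper
diagonal entry becomes `R - ρ`.
-/

section

variable {K : Type*} [Field K] [LinearOrder K] [IsStrictOrderedRing K]

theorem binary_quadratic_nonneg_iff {a b c : K} :
    (∀ x y, 0 ≤ a * x ^ 2 + 2 * b * x * y + c * y ^ 2) ↔ 0 ≤ a ∧ 0 ≤ c ∧ b ^ 2 ≤ a * c := by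
  constructor
  · intro h
    have hdiscrim : discrim a (2 * b) c ≤ 0 :=
      discrim_le_zero fun x ↦ by linear_combination h x 1
    refine ⟨by simpa using h 1 0, by simpa using h 0 1, ?_⟩
    rw [discrim] at hdiscrim
    linarith
  · rintro ⟨ha, hc, hdet⟩ x y
    rcases ha.eq_or_lt with rfl | ha
    · obtain rfl : b = 0 := by simpa using hdet
      simpa using mul_nonneg hc (sq_nonneg y)
    · refine nonneg_of_mul_nonneg_right ?_ ha
      calc 0 ≤ (a * x + b * y) ^ 2 + (a * c - b ^ 2) * y ^ 2 :=
            add_nonneg (sq_nonneg _) (mul_nonneg (sub_nonneg.2 hdet) (sq_nonneg y))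
        _ = a * (a * x ^ 2 + 2 * b * x * y + c * y ^ 2) := by ring

variable [StarRing K] [TrivialStar K]

theorem posSemidef_fin_two_of_iff {a b c : K} :
    !![a, b; b, c].PosSemidef ↔ 0 ≤ a ∧ 0 ≤ c ∧ b ^ 2 ≤ a * c := by
  have isHermitian : !![a, b; b, c].IsHermitian := by
    ext i j
    fin_cases i <;> fin_cases j <;> simp
  have quadraticForm_eq (x : Fin 2 → K) : star x ⬝ᵥ (!![a, b; b, c] *ᵥ x) =
      a * x 0 ^ 2 + 2 * b * x 0 * x 1 + c * x 1 ^ 2 := by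
    simp only [dotProduct, mulVec, Fin.sum_univ_two, Pi.star_apply, star_trivial, of_apply,
      cons_val_zero, cons_val_one]
    ring
  rw [posSemidef_iff_dotProduct_mulVec, and_iff_right isHermitian, ← binary_quadratic_nonneg_iff]
  simp only [quadraticForm_eq]
  exact ⟨fun h x y ↦ h ![x, y], fun h x ↦ h (x 0) (x 1)⟩

end

section

variable {K : Type*} [Field K]

/-- The matrix of the LMI certifying that the line `L dI/dt = -R I + u` is IF-OFP(`ν`, `ρ`) with
storage function `P I²`: it represents the supply rate `u I - ν u² - ρ I²` minus the storage
rate `d(P I²)/dt` as a quadratic form in `(I, u)`. -/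
def linePassivityMatrix (R L P ν ρ : K) : Matrix (Fin 2) (Fin 2) K :=
  !![2 * P * R / L - ρ, -P / L + 1 / 2; -P / L + 1 / 2, -ν]

variable [LinearOrder K] [IsStrictOrderedRing K] [StarRing K] [TrivialStar K]

theorem nonpos_of_posSemidef_linePassivityMatrix {R L P ν ρ : K}
    (h : (linePassivityMatrix R L P ν ρ).PosSemidef) : ν ≤ 0 :=
  neg_nonneg.1 (posSemidef_fin_two_of_iff.1 h).2.1

theorem posSemidef_linePassivityMatrix_zero_iff {R L P ρ : K} (hL : L ≠ 0) :
    (linePassivityMatrix R L P 0 ρ).PosSemidef ↔ P = L / 2 ∧ ρ ≤ R := by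
  have offDiag_eq_zero_iff : -P / L + 1 / 2 = 0 ↔ P = L / 2 := by
    field_simp
    constructor <;> intro h <;> linear_combination -h
  have diag_eq : 2 * (L / 2) * R / L = R := by field_simp
  calc (linePassivityMatrix R L P 0 ρ).PosSemidef
      ↔ 0 ≤ 2 * P * R / L - ρ ∧ -P / L + 1 / 2 = 0 := by
        simp [linePassivityMatrix, posSemidef_fin_two_of_iff]
    _ ↔ P = L / 2 ∧ 0 ≤ 2 * P * R / L - ρ := by rw [offDiag_eq_zero_iff, and_comm]
    _ ↔ P = L / 2 ∧ ρ ≤ R := and_congr_right fun hP ↦ by rw [hP, diag_eq, sub_nonneg]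

theorem line_passivity_indices_maximal_general {R L : K} (hL : L ≠ 0) :
    (∀ P ν ρ, (linePassivityMatrix R L P ν ρ).PosSemidef → ν ≤ 0) ∧
    (∀ P ρ, (linePassivityMatrix R L P 0 ρ).PosSemidef ↔ P = L / 2 ∧ ρ ≤ R) :=
  ⟨fun _ _ _ ↦ nonpos_of_posSemidef_linePassivityMatrix,
    fun _ _ ↦ posSemidef_linePassivityMatrix_zero_iff hL⟩

end

/-- Maximal feasible passivity indices of the transmission-line LMI:
(i) `M(L_l/2, 0, R_l) ⪰ 0`; (ii) feasibility with `P̄ > 0` forces `ν̄ ≤ 0`;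
(iii) if moreover `ν̄ = 0` then `P̄ = L_l/2` and `ρ̄ ≤ R_l`. -/
theorem line_passivity_indices_maximal (Rl Ll : ℝ) (hRl : 0 < Rl) (hLl : 0 < Ll)
    (M : ℝ → ℝ → ℝ → Matrix (Fin 2) (Fin 2) ℝ)
    (hM : ∀ P ν ρ, M P ν ρ =
      !![2 * P * Rl / Ll - ρ, -P / Ll + 1 / 2; -P / Ll + 1 / 2, -ν]) :
    (M (Ll / 2) 0 Rl).PosSemidef ∧
    (∀ P ν ρ, 0 < P → (M P ν ρ).PosSemidef → ν ≤ 0) ∧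
    (∀ P ν ρ, 0 < P → (M P ν ρ).PosSemidef → ν = 0 → P = Ll / 2 ∧ ρ ≤ Rl) := by
  obtain rfl : M = linePassivityMatrix Rl Ll := by funext P ν ρ; exact hM P ν ρ
  obtain ⟨index_nonpos, posSemidef_iff⟩ := line_passivity_indices_maximal_general (R := Rl) hLl.ne'
  refine ⟨(posSemidef_iff _ _).2 ⟨rfl, le_rfl⟩, fun P ν ρ _ ↦ index_nonpos P ν ρ, ?_⟩
  rintro P _ ρ - h rfl
  exact (posSemidef_iff P ρ).1 h
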